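/- Let H be a complex separable Hilbert space. For every nonempty face W of the set of state operators on H there exists a unique orthogonal projection P on H such that W = {T : T is a state operator and P T P = T}. Moreover this correspondence between nonempty faces and orthogonal projections is an order isomorphism: for nonempty faces W, W′ with associated projections P, P′, one has W′ ⊆ W if and only if P′ ≤ P. -/

import Mathlib

open scoped ComplexInnerProductSpace

/-- The trace of a (trace-class) operator computed along a Hilbert basis. -/
noncomputable def trAlong {H : Type*} [NormedAddCommGroup H] [InnerProductSpace ℂ H]
    {ι : Type*} (b : HilbertBasis ι ℂ H) (A : H →L[ℂ] H) : ℂ :=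
  ∑' i, ⟪b i, A (b i)⟫

/-- A state operator: a positive trace-class operator with trace one. -/
def IsStateOperator {H : Type*} [NormedAddCommGroup H] [InnerProductSpace ℂ H]
    [CompleteSpace H] {ι : Type*} (b : HilbertBasis ι ℂ H) (T : H →L[ℂ] H) : Prop :=
  T.IsPositive ∧ Summable (fun i => ⟪b i, T (b i)⟫) ∧ trAlong b T = 1

/-- Trace norm `tr √(A*A)` computed along a Hilbert basis. -/
noncomputable def traceNormAlong {H : Type*} [NormedAddCommGroup H] [InnerProductSpace ℂ H]
    [CompleteSpace H] {ι : Type*} (b : HilbertBasis ι ℂ H) (A : H →L[ℂ] H) : ℝ :=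
  ∑' i, (⟪b i, (CFC.sqrt (A * A)) (b i)⟫).re

/-- A face of the set of state operators: a trace-norm (sequentially) closed subset of the
state operators that is closed under convex combinations and contains all convex components
of any of its elements. -/
def IsFace {H : Type*} [NormedAddCommGroup H] [InnerProductSpace ℂ H] [CompleteSpace H]
    {ι : Type*} (b : HilbertBasis ι ℂ H) (W : Set (H →L[ℂ] H)) : Prop :=
  (∀ T ∈ W, IsStateOperator b T) ∧
  (∀ T : H →L[ℂ] H, IsStateOperator b T → ∀ u : ℕ → H →L[ℂ] H, (∀ n, u n ∈ W) →
      Filter.Tendsto (fun n => traceNormAlong b (u n - T)) Filter.atTop (nhds 0) → T ∈ W) ∧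
  (∀ T₁ ∈ W, ∀ T₂ ∈ W, ∀ w : ℝ, 0 ≤ w → w ≤ 1 →
      (w : ℂ) • T₁ + (1 - (w : ℂ)) • T₂ ∈ W) ∧
  (∀ (T₁ T₂ : H →L[ℂ] H) (w : ℝ), IsStateOperator b T₁ → IsStateOperator b T₂ →
      0 < w → w < 1 → (w : ℂ) • T₁ + (1 - (w : ℂ)) • T₂ ∈ W → T₁ ∈ W ∧ T₂ ∈ W)

/-!
A face `W` corresponds to the subspace of vectors `v` whose operator `v v*` is dominated by the cone
over `W`. Trace-norm closedness of `W` makes this subspace closed, because `v ↦ v v*` is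
continuous into the trace class. It contains the range of every `T ∈ W`, since
`(T x)(T x)* = √T (√T x)(√T x)* √T ≤ ‖√T x‖² T`. Conversely, a state `T` with range in the subspace
is the trace-norm limit of the sums `∑ (√T bᵢ)(√T bᵢ)*` over finite sets of basis vectors, and these
lie in the cone of dominated operators.
-/

open InnerProductSpace
open scoped Pointwise

section Convex

variable {E : Type*} [AddCommGroup E] [Module ℝ E]

theorem exists_mem_smul_of_mem_hull {s : Set E} (hs : Convex ℝ s) (hne : s.Nonempty) {x : E}
    (hx : x ∈ PointedCone.hull ℝ s) : ∃ c : ℝ, 0 ≤ c ∧ x ∈ c • s := by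
  induction hx using Submodule.span_induction with
  | mem x hx => exact ⟨1, zero_le_one, by rwa [one_smul]⟩
  | zero => exact ⟨0, le_rfl, by rw [Set.zero_smul_set hne]; rfl⟩
  | add x y _ _ ihx ihy =>
    obtain ⟨c, hc, hx⟩ := ihx
    obtain ⟨d, hd, hy⟩ := ihy
    exact ⟨c + d, add_nonneg hc hd, by rw [hs.add_smul hc hd]; exact Set.add_mem_add hx hy⟩
  | smul r x _ ih =>
    obtain ⟨c, hc, hx⟩ := ih
    exact ⟨r * c, mul_nonneg r.2 hc, by rw [mul_smul]; exact Set.smul_mem_smul_set hx⟩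

end Convex

section Operators

variable {H : Type*} [NormedAddCommGroup H] [InnerProductSpace ℂ H]

theorem re_inner_le_re_inner_of_le {A B : H →L[ℂ] H} (h : A ≤ B) (x : H) :
    (⟪x, A x⟫).re ≤ (⟪x, B x⟫).re := by
  have hpos := ((ContinuousLinearMap.le_def A B).1 h).re_inner_nonneg_right x
  simpa [inner_sub_right] using hpos

theorem re_inner_rankOne_self (v x : H) : (⟪x, rankOne ℂ v v x⟫).re = ‖⟪v, x⟫‖ ^ 2 := by
  rw [rankOne_apply, inner_smul_right, ← inner_conj_symm x v, Complex.mul_conj,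
    Complex.ofReal_re, Complex.normSq_eq_norm_sq]

theorem rankOne_self_nonneg (v : H) : 0 ≤ rankOne ℂ v v :=
  (ContinuousLinearMap.nonneg_iff_isPositive _).2 (isPositive_rankOne_self v)

theorem rankOne_smul_self (c : ℂ) (v : H) :
    rankOne ℂ (c • v) (c • v) = ‖c‖ ^ 2 • rankOne ℂ v v := by
  simp [smul_smul, ← Complex.coe_smul, Complex.mul_conj']

theorem rankOne_add_self_add_rankOne_sub_self (u v : H) :
    rankOne ℂ (u + v) (u + v) + rankOne ℂ (u - v) (u - v) =
      (2 : ℝ) • (rankOne ℂ u u + rankOne ℂ v v) := by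
  simp only [map_add, map_sub, add_apply, sub_apply]
  module

theorem rankOne_add_self_sub_rankOne_sub_self (u v : H) :
    rankOne ℂ (u + v) (u + v) - rankOne ℂ (u - v) (u - v) =
      (2 : ℝ) • (rankOne ℂ u v + rankOne ℂ v u) := by
  simp only [map_add, map_sub, add_apply, sub_apply]
  module

theorem rankOne_real_smul_real_smul (r s : ℝ) (u v : H) :
    rankOne ℂ (r • u) (s • v) = (r * s) • rankOne ℂ u v := by
  simp [← Complex.coe_smul, smul_smul]

theorem sum_rankOne_self_le_one {ι : Type*} {v : ι → H} (hv : Orthonormal ℂ v) (s : Finset ι) :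
    ∑ i ∈ s, rankOne ℂ (v i) (v i) ≤ 1 := by
  have hsum : (∑ i ∈ s, rankOne ℂ (v i) (v i)).IsPositive :=
    ContinuousLinearMap.isPositive_sum s fun i _ ↦ isPositive_rankOne_self (v i)
  rw [ContinuousLinearMap.le_def, ContinuousLinearMap.isPositive_def]
  refine ⟨ContinuousLinearMap.isPositive_one.isSymmetric.sub hsum.isSymmetric, fun x ↦ ?_⟩
  have bessel : ∑ i ∈ s, (⟪x, rankOne ℂ (v i) (v i) x⟫).re ≤ ‖x‖ ^ 2 := by
    simpa only [re_inner_rankOne_self] using hv.sum_inner_products_le x (s := s)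
  rw [ContinuousLinearMap.reApplyInnerSelf_apply, inner_re_symm]
  simpa only [sub_apply, one_apply_eq_self, inner_sub_right, map_sub, inner_self_eq_norm_sq,
    sum_apply, inner_sum, map_sum, RCLike.re_to_complex, sub_nonneg]
    using bessel

variable [CompleteSpace H]

theorem mul_rankOne_self_mul_star (A : H →L[ℂ] H) (v : H) :
    A * rankOne ℂ v v * star A = rankOne ℂ (A v) (A v) := by
  simp [ContinuousLinearMap.mul_def, comp_rankOne, rankOne_comp,
    ContinuousLinearMap.star_eq_adjoint]

theorem rankOne_self_le (v : H) : rankOne ℂ v v ≤ ‖v‖ ^ 2 • (1 : H →L[ℂ] H) := by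
  have h := (isPositive_rankOne_self (𝕜 := ℂ) v).isSelfAdjoint.le_algebraMap_norm_self
  rwa [norm_rankOne, ← sq, Algebra.algebraMap_eq_smul_one] at h

theorem re_inner_star_mul_self_apply (X : H →L[ℂ] H) (x : H) :
    (⟪x, (star X * X) x⟫).re = ‖X x‖ ^ 2 :=
  (ContinuousLinearMap.apply_norm_sq_eq_inner_adjoint_right X x).symm

theorem rankOne_apply_self_le {T : H →L[ℂ] H} (hT : 0 ≤ T) (x : H) :
    rankOne ℂ (T x) (T x) ≤ ‖CFC.sqrt T x‖ ^ 2 • T := by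
  set R := CFC.sqrt T
  have hR : IsSelfAdjoint R := (CFC.sqrt_nonneg T).isSelfAdjoint
  have hRR : R * R = T := CFC.sqrt_mul_sqrt_self T hT
  calc rankOne ℂ (T x) (T x) = R * rankOne ℂ (R x) (R x) * star R := by
        rw [mul_rankOne_self_mul_star, ← hRR]; rfl
    _ ≤ R * (‖R x‖ ^ 2 • 1) * star R := star_right_conjugate_le_conjugate (rankOne_self_le _) R
    _ = ‖R x‖ ^ 2 • T := by rw [mul_smul_one, smul_mul_assoc, hR.star_eq, hRR]

theorem exists_isStarProjection_abs_eq {D : H →L[ℂ] H} (hD : IsSelfAdjoint D) :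
    ∃ E : H →L[ℂ] H, IsStarProjection E ∧ CFC.abs D = E * D * E - (1 - E) * D * (1 - E) := by
  have : CompleteSpace (D⁻).ker := (D⁻).isClosed_ker.completeSpace_coe
  set E := (D⁻).ker.starProjection
  have hE : IsStarProjection E := isStarProjection_starProjection
  have neg_mul_E : D⁻ * E = 0 := by
    ext x
    exact Submodule.starProjection_apply_mem (D⁻).ker x
  have E_mul_pos : E * D⁺ = D⁺ := by
    ext x
    exact Submodule.starProjection_eq_self_iff.2
      (DFunLike.congr_fun (CFC.negPart_mul_posPart D) x)
  have E_mul_neg : E * D⁻ = 0 := by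
    simpa [hE.isSelfAdjoint.star_eq, (CFC.negPart_nonneg D).isSelfAdjoint.star_eq]
      using congrArg star neg_mul_E
  have pos_mul_E : D⁺ * E = D⁺ := by
    simpa [hE.isSelfAdjoint.star_eq, (CFC.posPart_nonneg D).isSelfAdjoint.star_eq]
      using congrArg star E_mul_pos
  refine ⟨E, hE, ?_⟩
  have E_mul : E * D = D⁺ := by
    conv_lhs => rw [← CFC.posPart_sub_negPart D]
    rw [mul_sub, E_mul_pos, E_mul_neg, sub_zero]
  have one_sub_E_mul : (1 - E) * D = -D⁻ := by
    rw [sub_mul, one_mul, E_mul, sub_eq_iff_eq_add, neg_add_eq_sub, CFC.posPart_sub_negPart D]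
  rw [E_mul, one_sub_E_mul, pos_mul_E, mul_sub, mul_one, neg_mul, neg_mul_E,
    ← CFC.posPart_add_negPart D]
  abel

end Operators

section Trace

variable {H : Type*} [NormedAddCommGroup H] [InnerProductSpace ℂ H] {ι : Type*}
  (b : HilbertBasis ι ℂ H)

theorem hasSum_norm_inner_sq (v : H) : HasSum (fun i ↦ ‖⟪v, b i⟫‖ ^ 2) (‖v‖ ^ 2) := by
  have h := Complex.hasSum_re (b.hasSum_inner_mul_inner v v)
  rw [show (⟪v, v⟫).re = ‖v‖ ^ 2 from inner_self_eq_norm_sq (𝕜 := ℂ) v] at h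
  refine h.congr_fun fun i ↦ ?_
  rw [← inner_conj_symm (b i) v, Complex.mul_conj, Complex.ofReal_re, Complex.normSq_eq_norm_sq]

/-- `A` is a positive trace-class operator with trace `t`, computed along `b`. -/
structure HasTrace (A : H →L[ℂ] H) (t : ℝ) : Prop where
  nonneg : 0 ≤ A
  hasSum : HasSum (fun i ↦ (⟪b i, A (b i)⟫).re) t

namespace HasTrace

variable {b} {A B : H →L[ℂ] H} {s t : ℝ}

theorem re_inner_nonneg (hA : HasTrace b A t) (x : H) : 0 ≤ (⟪x, A x⟫).re :=
  ((ContinuousLinearMap.nonneg_iff_isPositive A).1 hA.nonneg).re_inner_nonneg_right x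

theorem zero : HasTrace b (0 : H →L[ℂ] H) 0 := ⟨le_rfl, by simp⟩

theorem rankOne_self (v : H) : HasTrace b (rankOne ℂ v v) (‖v‖ ^ 2) :=
  ⟨rankOne_self_nonneg v, by
    simpa only [re_inner_rankOne_self] using hasSum_norm_inner_sq b v⟩

theorem unique (hs : HasTrace b A s) (ht : HasTrace b A t) : s = t :=
  hs.hasSum.unique ht.hasSum

theorem trace_nonneg (hA : HasTrace b A t) : 0 ≤ t :=
  hA.hasSum.nonneg fun i ↦ hA.re_inner_nonneg (b i)

theorem exists_of_le (hB : HasTrace b B t) (hA : 0 ≤ A) (hAB : A ≤ B) :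
    ∃ s ≤ t, HasTrace b A s := by
  have hle (i : ι) := re_inner_le_re_inner_of_le hAB (b i)
  have hnonneg (i : ι) : 0 ≤ (⟪b i, A (b i)⟫).re := by
    simpa using re_inner_le_re_inner_of_le hA (b i)
  have hsum := (hB.hasSum.summable.of_nonneg_of_le hnonneg hle).hasSum
  exact ⟨_, hasSum_le hle hsum hB.hasSum, hA, hsum⟩

variable [CompleteSpace H]

theorem add (hA : HasTrace b A s) (hB : HasTrace b B t) : HasTrace b (A + B) (s + t) :=
  ⟨add_nonneg hA.nonneg hB.nonneg, by simpa [inner_add_right] using hA.hasSum.add hB.hasSum⟩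

theorem sub (hA : HasTrace b A s) (hB : HasTrace b B t) (h : B ≤ A) :
    HasTrace b (A - B) (s - t) :=
  ⟨sub_nonneg.2 h, by simpa [inner_sub_right] using hA.hasSum.sub hB.hasSum⟩

theorem smul {c : ℝ} (hc : 0 ≤ c) (hA : HasTrace b A t) : HasTrace b (c • A) (c * t) :=
  ⟨smul_nonneg hc hA.nonneg, by
    simpa [← Complex.coe_smul, inner_smul_right] using hA.hasSum.mul_left c⟩

theorem sum {α : Type*} {F : Finset α} {f : α → H →L[ℂ] H} {c : α → ℝ}
    (h : ∀ i ∈ F, HasTrace b (f i) (c i)) : HasTrace b (∑ i ∈ F, f i) (∑ i ∈ F, c i) :=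
  ⟨Finset.sum_nonneg fun i hi ↦ (h i hi).nonneg, by
    simpa [inner_sum] using hasSum_sum fun i hi ↦ (h i hi).hasSum⟩

theorem inv_norm_sq_smul_rankOne_self {v : H} (hv : v ≠ 0) :
    HasTrace b ((‖v‖ ^ 2)⁻¹ • rankOne ℂ v v) 1 := by
  have hv2 : ‖v‖ ^ 2 ≠ 0 := by positivity
  simpa [hv2] using (rankOne_self v).smul (inv_nonneg.2 (sq_nonneg ‖v‖))

end HasTrace

variable [CompleteSpace H] {b}

theorem hasSum_norm_sq_star_apply {X : H →L[ℂ] H} {t : ℝ} (h : HasSum (fun i ↦ ‖X (b i)‖ ^ 2) t) :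
    HasSum (fun j ↦ ‖star X (b j)‖ ^ 2) t := by
  have hrow (i : ι) := hasSum_norm_inner_sq b (X (b i))
  have hcol (j : ι) : HasSum (fun i ↦ ‖⟪X (b i), b j⟫‖ ^ 2) (‖star X (b j)‖ ^ 2) := by
    simpa only [ContinuousLinearMap.star_eq_adjoint, ContinuousLinearMap.adjoint_inner_left,
      norm_inner_symm (b j)] using hasSum_norm_inner_sq b (star X (b j))
  have hsummable : Summable fun p : ι × ι ↦ ‖⟪X (b p.1), b p.2⟫‖ ^ 2 :=
    (summable_prod_of_nonneg fun _ ↦ sq_nonneg _).2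
      ⟨fun i ↦ (hrow i).summable, by simpa only [(hrow _).tsum_eq] using h.summable⟩
  have hprod : HasSum (fun p : ι × ι ↦ ‖⟪X (b p.1), b p.2⟫‖ ^ 2) t := by
    rw [← (hsummable.hasSum.prod_fiberwise hrow).unique h]
    exact hsummable.hasSum
  exact ((Equiv.prodComm ι ι).hasSum_iff.2 hprod).prod_fiberwise hcol

theorem hasTrace_star_mul_self_iff {X : H →L[ℂ] H} {t : ℝ} :
    HasTrace b (star X * X) t ↔ HasSum (fun i ↦ ‖X (b i)‖ ^ 2) t := by
  simp only [← re_inner_star_mul_self_apply]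
  exact ⟨HasTrace.hasSum, fun h ↦ ⟨star_mul_self_nonneg X, h⟩⟩

theorem HasTrace.mul_star_self {X : H →L[ℂ] H} {t : ℝ} (h : HasTrace b (star X * X) t) :
    HasTrace b (X * star X) t := by
  have hstar := hasSum_norm_sq_star_apply (hasTrace_star_mul_self_iff.1 h)
  simpa only [star_star] using hasTrace_star_mul_self_iff.2 hstar

theorem HasTrace.exists_conj {A : H →L[ℂ] H} {t : ℝ} (hA : HasTrace b A t) {E : H →L[ℂ] H}
    (hE : IsStarProjection E) : ∃ s ≤ t, HasTrace b (E * A * E) s := by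
  set R := CFC.sqrt A
  have hR : star R = R := (CFC.sqrt_nonneg A).isSelfAdjoint.star_eq
  have hRR : R * R = A := CFC.sqrt_mul_sqrt_self A hA.nonneg
  have hRER : R * E * R = star (E * R) * (E * R) := by
    rw [star_mul, hE.isSelfAdjoint.star_eq, hR, ← mul_assoc, mul_assoc R E E,
      hE.isIdempotentElem.eq]
  have hle : R * E * R ≤ A := by
    simpa [hR, hRR] using star_right_conjugate_le_conjugate hE.le_one R
  obtain ⟨s, hst, hs⟩ := hA.exists_of_le (hRER ▸ star_mul_self_nonneg _) hle
  refine ⟨s, hst, ?_⟩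
  rw [hRER] at hs
  simpa [hR, hE.isSelfAdjoint.star_eq, ← hRR, mul_assoc] using hs.mul_star_self

theorem HasTrace.traceNormAlong_eq {A : H →L[ℂ] H} {t : ℝ} (hA : IsSelfAdjoint A)
    (h : HasTrace b (CFC.abs A) t) : traceNormAlong b A = t := by
  rw [← h.hasSum.tsum_eq, traceNormAlong, CFC.abs, hA.star_eq]

theorem traceNormAlong_nonneg (A : H →L[ℂ] H) : 0 ≤ traceNormAlong b A :=
  tsum_nonneg fun i ↦ by simpa using re_inner_le_re_inner_of_le (CFC.sqrt_nonneg (A * A)) (b i)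

theorem HasTrace.traceNormAlong_sub_le {A B : H →L[ℂ] H} {s t : ℝ} (hA : HasTrace b A s)
    (hB : HasTrace b B t) : traceNormAlong b (A - B) ≤ s + t := by
  have hD : IsSelfAdjoint (A - B) := hA.nonneg.isSelfAdjoint.sub hB.nonneg.isSelfAdjoint
  obtain ⟨E, hE, habs⟩ := exists_isStarProjection_abs_eq hD
  obtain ⟨s', hs', hEA⟩ := hA.exists_conj hE
  obtain ⟨t', ht', hEB⟩ := hB.exists_conj hE.one_sub
  have hle : CFC.abs (A - B) ≤ E * A * E + (1 - E) * B * (1 - E) := by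
    obtain ⟨_, _, hEB'⟩ := hB.exists_conj hE
    obtain ⟨_, _, hEA'⟩ := hA.exists_conj hE.one_sub
    rw [habs, ← sub_nonneg]
    convert add_nonneg hEB'.nonneg hEA'.nonneg using 1
    noncomm_ring
  obtain ⟨r, hr, habs_trace⟩ := (hEA.add hEB).exists_of_le (CFC.abs_nonneg _) hle
  rw [habs_trace.traceNormAlong_eq hD]
  linarith

theorem isStateOperator_iff_hasTrace {T : H →L[ℂ] H} :
    IsStateOperator b T ↔ HasTrace b T 1 := by
  constructor
  · rintro ⟨hpos, hsum, htr⟩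
    refine ⟨(ContinuousLinearMap.nonneg_iff_isPositive T).2 hpos, ?_⟩
    rw [← Complex.one_re, ← htr]
    exact Complex.hasSum_re hsum.hasSum
  · rintro ⟨hnonneg, hsum⟩
    have hpos := (ContinuousLinearMap.nonneg_iff_isPositive T).1 hnonneg
    have hreal (i : ι) : ((⟪b i, T (b i)⟫).re : ℂ) = ⟪b i, T (b i)⟫ :=
      hpos.isSymmetric.coe_re_inner_self_apply (b i)
    have hsum' := Complex.hasSum_ofReal.2 hsum
    simp only [hreal, Complex.ofReal_one] at hsum'
    exact ⟨hpos, hsum'.summable, hsum'.tsum_eq⟩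

end Trace

section TraceNorm

variable {H : Type*} [NormedAddCommGroup H] [InnerProductSpace ℂ H] {ι : Type*}
  (b : HilbertBasis ι ℂ H)

/-- `D` is a difference of two positive trace-class operators whose traces add up to at most `r`.
This is the bound `‖D‖₁ ≤ r` for self-adjoint `D`, encoded so that it visibly satisfies the triangle
inequality. -/
def TraceNormLE (D : H →L[ℂ] H) (r : ℝ) : Prop :=
  ∃ A B s t, HasTrace b A s ∧ HasTrace b B t ∧ D = A - B ∧ s + t ≤ r

variable {b}

theorem HasTrace.traceNormLE {A : H →L[ℂ] H} {t : ℝ} (hA : HasTrace b A t) :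
    TraceNormLE b A t :=
  ⟨A, 0, t, 0, hA, HasTrace.zero, (sub_zero A).symm, (add_zero t).le⟩

namespace TraceNormLE

variable {D D' : H →L[ℂ] H} {r r' : ℝ}

theorem mono (hD : TraceNormLE b D r) (h : r ≤ r') : TraceNormLE b D r' := by
  obtain ⟨A, B, s, t, hA, hB, hAB, hst⟩ := hD
  exact ⟨A, B, s, t, hA, hB, hAB, hst.trans h⟩

theorem neg (hD : TraceNormLE b D r) : TraceNormLE b (-D) r := by
  obtain ⟨A, B, s, t, hA, hB, rfl, hst⟩ := hD
  exact ⟨B, A, t, s, hB, hA, neg_sub A B, by rwa [add_comm]⟩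

variable [CompleteSpace H]

theorem add (hD : TraceNormLE b D r) (hD' : TraceNormLE b D' r') :
    TraceNormLE b (D + D') (r + r') := by
  obtain ⟨A, B, s, t, hA, hB, rfl, hst⟩ := hD
  obtain ⟨A', B', s', t', hA', hB', rfl, hst'⟩ := hD'
  exact ⟨_, _, _, _, hA.add hA', hB.add hB', sub_add_sub_comm A B A' B', by linarith⟩

theorem smul (c : ℝ) (hD : TraceNormLE b D r) : TraceNormLE b (c • D) (|c| * r) := by
  have hscale {c : ℝ} (hc : 0 ≤ c) : TraceNormLE b (c • D) (c * r) := by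
    obtain ⟨A, B, s, t, hA, hB, rfl, hst⟩ := hD
    refine ⟨_, _, _, _, hA.smul hc, hB.smul hc, smul_sub c A B, ?_⟩
    rw [← mul_add]
    exact mul_le_mul_of_nonneg_left hst hc
  rcases abs_choice c with h | h
  · rw [h]
    exact hscale (abs_eq_self.1 h)
  · simpa [h] using (hscale (neg_nonneg.2 (abs_eq_neg_self.1 h))).neg

theorem traceNormAlong_le (hD : TraceNormLE b D r) : traceNormAlong b D ≤ r := by
  obtain ⟨A, B, s, t, hA, hB, rfl, hst⟩ := hD
  exact (hA.traceNormAlong_sub_le hB).trans hst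

theorem abs_trace_sub_le {A B : H →L[ℂ] H} {s t : ℝ} (h : TraceNormLE b (A - B) r)
    (hA : HasTrace b A s) (hB : HasTrace b B t) : |s - t| ≤ r := by
  obtain ⟨X, Y, x, y, hX, hY, hXY, hxy⟩ := h
  have heq : A + Y = B + X := by
    rw [← sub_eq_zero, add_sub_add_comm, hXY, sub_add_sub_cancel, sub_self]
  have htr : s + y = t + x := (heq ▸ hA.add hY).unique (hB.add hX)
  rw [abs_le]
  constructor <;> linarith [hX.trace_nonneg, hY.trace_nonneg]

end TraceNormLE

variable [CompleteSpace H]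

theorem traceNormLE_rankOne_add_rankOne_swap (a c : H) :
    TraceNormLE b (rankOne ℂ a c + rankOne ℂ c a) (2 * (‖a‖ * ‖c‖)) := by
  rcases (mul_nonneg (norm_nonneg a) (norm_nonneg c)).eq_or_lt with h | h
  · have hac : a = 0 ∨ c = 0 := by simpa using h.symm
    rcases hac with rfl | rfl <;> simpa using (HasTrace.zero (b := b)).traceNormLE
  set m := ‖a‖ * ‖c‖
  -- Rescaling the two vectors to a common norm makes the polarisation below optimal.
  set a' := ‖c‖ • a
  set c' := ‖a‖ • c
  have hm : 0 ≤ (2 * m)⁻¹ := by positivity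
  have ha' : ‖a'‖ = m := by rw [norm_smul, norm_norm, mul_comm]
  have hc' : ‖c'‖ = m := by rw [norm_smul, norm_norm]
  refine ⟨_, _, _, _, (HasTrace.rankOne_self (a' + c')).smul hm,
    (HasTrace.rankOne_self (a' - c')).smul hm, ?_, ?_⟩
  · rw [← smul_sub, rankOne_add_self_sub_rankOne_sub_self, rankOne_real_smul_real_smul,
      rankOne_real_smul_real_smul, mul_comm ‖c‖, ← smul_add, smul_smul (2 : ℝ),
      inv_smul_smul₀ (mul_pos two_pos h).ne']
  · have hnorm := parallelogram_law_with_norm ℂ a' c'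
    rw [ha', hc'] at hnorm
    rw [← mul_add, inv_mul_le_iff₀ (by positivity)]
    linarith

theorem traceNormLE_rankOne_self_sub_rankOne_self (u v : H) :
    TraceNormLE b (rankOne ℂ u u - rankOne ℂ v v) (‖u + v‖ * ‖u - v‖) := by
  have hpolar : rankOne ℂ u u - rankOne ℂ v v =
      (2⁻¹ : ℝ) • (rankOne ℂ (u + v) (u - v) + rankOne ℂ (u - v) (u + v)) := by
    simp only [map_add, map_sub, add_apply, sub_apply]
    module
  rw [hpolar]
  exact ((traceNormLE_rankOne_add_rankOne_swap _ _).smul _).mono (by norm_num [← mul_assoc])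

theorem HasTrace.exists_traceNormLE_sum_rankOne_sub {T : H →L[ℂ] H} {t ε : ℝ}
    (hT : HasTrace b T t) (hε : 0 < ε) : ∃ F : Finset ι, TraceNormLE b
      (∑ i ∈ F, rankOne ℂ (CFC.sqrt T (b i)) (CFC.sqrt T (b i)) - T) ε := by
  set R := CFC.sqrt T
  have hR : star R = R := (CFC.sqrt_nonneg T).isSelfAdjoint.star_eq
  have hRR : R * R = T := CFC.sqrt_mul_sqrt_self T hT.nonneg
  have hsum : HasSum (fun i ↦ ‖R (b i)‖ ^ 2) t :=
    hasTrace_star_mul_self_iff.1 (by rwa [hR, hRR])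
  obtain ⟨F, hF⟩ := (hsum.eventually_const_lt (sub_lt_self t hε)).exists
  have hle : ∑ i ∈ F, rankOne ℂ (R (b i)) (R (b i)) ≤ T := by
    have hconj := star_right_conjugate_le_conjugate (sum_rankOne_self_le_one b.orthonormal F) R
    simp only [Finset.mul_sum, Finset.sum_mul, mul_rankOne_self_mul_star] at hconj
    rwa [mul_one, hR, hRR] at hconj
  have htrace := hT.sub (HasTrace.sum fun i _ ↦ HasTrace.rankOne_self (R (b i))) hle
  exact ⟨F, neg_sub T _ ▸ (htrace.traceNormLE.mono (by linarith)).neg⟩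

end TraceNorm

section Faces

variable {H : Type*} [NormedAddCommGroup H] [InnerProductSpace ℂ H] [CompleteSpace H]

/-- The positive operators lying below some element of the convex cone generated by `W`. -/
def dominatedCone (W : Set (H →L[ℂ] H)) : PointedCone ℝ (H →L[ℂ] H) where
  carrier := {A | 0 ≤ A ∧ ∃ B ∈ PointedCone.hull ℝ W, A ≤ B}
  zero_mem' := ⟨le_rfl, 0, zero_mem _, le_rfl⟩
  add_mem' := by
    rintro A A' ⟨hA, B, hB, hAB⟩ ⟨hA', B', hB', hAB'⟩
    exact ⟨add_nonneg hA hA', B + B', add_mem hB hB', add_le_add hAB hAB'⟩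
  smul_mem' := by
    rintro c A ⟨hA, B, hB, hAB⟩
    exact ⟨smul_nonneg c.2 hA, c • B, Submodule.smul_mem _ c hB,
      smul_le_smul_of_nonneg_left hAB c.2⟩

theorem mem_dominatedCone_of_le {W : Set (H →L[ℂ] H)} {A B : H →L[ℂ] H}
    (hB : B ∈ dominatedCone W) (hA : 0 ≤ A) (hAB : A ≤ B) : A ∈ dominatedCone W := by
  obtain ⟨-, C, hC, hBC⟩ := hB
  exact ⟨hA, C, hC, hAB.trans hBC⟩

/-- The vectors `v` for which `v v*` is dominated by the cone over `W`. For a face `W`, this is the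
closed subspace onto which the associated projection projects. -/
def faceSupport (W : Set (H →L[ℂ] H)) : Submodule ℂ H where
  carrier := {v | rankOne ℂ v v ∈ dominatedCone W}
  zero_mem' := by simp
  add_mem' := by
    intro u v hu hv
    refine mem_dominatedCone_of_le (PointedCone.smul_mem _ zero_le_two (add_mem hu hv))
      (rankOne_self_nonneg _) ?_
    rw [← rankOne_add_self_add_rankOne_sub_self]
    exact le_add_of_nonneg_right (rankOne_self_nonneg _)
  smul_mem' := by
    intro c v hv
    rw [Set.mem_ofPred_eq, rankOne_smul_self]
    exact PointedCone.smul_mem _ (sq_nonneg _) hv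

theorem sqrt_apply_mem_of_forall_apply_mem {T : H →L[ℂ] H} (hT : 0 ≤ T) {K : Submodule ℂ H}
    (hK : IsClosed (K : Set H)) (hTK : ∀ x, T x ∈ K) (x : H) : CFC.sqrt T x ∈ K := by
  set R := CFC.sqrt T
  have hR : IsSelfAdjoint R := (CFC.sqrt_nonneg T).isSelfAdjoint
  have hRR : star R * R = T := by rw [hR.star_eq, CFC.sqrt_mul_sqrt_self T hT]
  have : CompleteSpace K := hK.completeSpace_coe
  rw [← K.orthogonal_orthogonal, Submodule.mem_orthogonal]
  intro y hy
  have hTy : ⟪y, T y⟫ = 0 := Submodule.inner_left_of_mem_orthogonal (hTK y) hy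
  have hRy : R y = 0 := by
    rw [← norm_eq_zero, ← sq_eq_zero_iff, ← re_inner_star_mul_self_apply, hRR, hTy, Complex.zero_re]
  rw [← ContinuousLinearMap.adjoint_inner_left, ← ContinuousLinearMap.star_eq_adjoint, hR.star_eq,
    hRy, inner_zero_left]

namespace IsFace

variable {ι : Type*} {b : HilbertBasis ι ℂ H} {W : Set (H →L[ℂ] H)}

theorem hasTrace_of_mem (hW : IsFace b W) {T : H →L[ℂ] H} (hT : T ∈ W) : HasTrace b T 1 :=
  isStateOperator_iff_hasTrace.1 (hW.1 T hT)

theorem convex (hW : IsFace b W) : Convex ℝ W := by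
  intro T₁ h₁ T₂ h₂ w w' hw hw' hww'
  have hmem := hW.2.2.1 T₁ h₁ T₂ h₂ w hw (by linarith)
  rwa [← Complex.ofReal_one, ← Complex.ofReal_sub, Complex.coe_smul, Complex.coe_smul,
    ← hww', add_sub_cancel_left] at hmem

theorem mem_of_le_smul (hW : IsFace b W) {T T' : H →L[ℂ] H} (hT : HasTrace b T 1) (hT' : T' ∈ W)
    {c : ℝ} (hc : 0 ≤ c) (hle : T ≤ c • T') : T ∈ W := by
  have hT'1 := hW.hasTrace_of_mem hT'
  have hc1 : 1 ≤ c := by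
    obtain ⟨t, htc, ht⟩ := (hT'1.smul hc).exists_of_le hT.nonneg hle
    linarith [ht.unique hT]
  set w := (c + 1)⁻¹ with hw
  have hw0 : 0 < w := by positivity
  have hwc : w * c = 1 - w := by rw [hw]; field_simp; ring
  have hw1 : 0 < 1 - w := by rw [← hwc]; positivity
  have hwT : w • T ≤ T' :=
    calc w • T ≤ w • c • T' := smul_le_smul_of_nonneg_left hle hw0.le
      _ = T' - w • T' := by rw [smul_smul, hwc, sub_smul, one_smul]
      _ ≤ T' := sub_le_self T' (smul_nonneg hw0.le hT'1.nonneg)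
  have hrest : HasTrace b ((1 - w)⁻¹ • (T' - w • T)) 1 := by
    simpa [hw1.ne'] using (hT'1.sub (hT.smul hw0.le) hwT).smul (inv_nonneg.2 hw1.le)
  refine (hW.2.2.2 T _ w (isStateOperator_iff_hasTrace.2 hT) (isStateOperator_iff_hasTrace.2 hrest)
    hw0 (by linarith) ?_).1
  rwa [← Complex.ofReal_one, ← Complex.ofReal_sub, Complex.coe_smul, Complex.coe_smul,
    smul_inv_smul₀ hw1.ne', add_sub_cancel]

theorem exists_le_smul_of_mem_dominatedCone (hW : IsFace b W) (hne : W.Nonempty)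
    {A : H →L[ℂ] H} (hA : A ∈ dominatedCone W) : ∃ T ∈ W, ∃ c : ℝ, 0 ≤ c ∧ A ≤ c • T := by
  obtain ⟨-, B, hB, hAB⟩ := hA
  obtain ⟨c, hc, T, hT, rfl⟩ := exists_mem_smul_of_mem_hull hW.convex hne hB
  exact ⟨T, hT, c, hc, hAB⟩

theorem exists_hasTrace_of_mem_dominatedCone (hW : IsFace b W) (hne : W.Nonempty)
    {A : H →L[ℂ] H} (hA : A ∈ dominatedCone W) : ∃ t, HasTrace b A t := by
  obtain ⟨T, hT, c, hc, hle⟩ := hW.exists_le_smul_of_mem_dominatedCone hne hA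
  obtain ⟨t, -, ht⟩ := ((hW.hasTrace_of_mem hT).smul hc).exists_of_le hA.1 hle
  exact ⟨t, ht⟩

theorem mem_iff_mem_dominatedCone (hW : IsFace b W) (hne : W.Nonempty) {T : H →L[ℂ] H}
    (hT : HasTrace b T 1) : T ∈ W ↔ T ∈ dominatedCone W := by
  refine ⟨fun h ↦ ⟨hT.nonneg, T, Submodule.subset_span h, le_rfl⟩, fun h ↦ ?_⟩
  obtain ⟨T', hT', c, hc, hle⟩ := hW.exists_le_smul_of_mem_dominatedCone hne h
  exact hW.mem_of_le_smul hT hT' hc hle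

theorem mem_of_forall_exists_traceNormAlong_le (hW : IsFace b W) {T : H →L[ℂ] H}
    (hT : IsStateOperator b T) (h : ∀ ε > 0, ∃ S ∈ W, traceNormAlong b (S - T) ≤ ε) : T ∈ W := by
  choose u huW hu using fun n : ℕ ↦ h (1 / (n + 1)) Nat.one_div_pos_of_nat
  exact hW.2.1 T hT u huW (squeeze_zero (fun _ ↦ traceNormAlong_nonneg _) hu
    tendsto_one_div_add_atTop_nhds_zero_nat)

/-- The trace of `A` tends to `1` along with `A → T`, so that normalising `A` to an element of `W`
does not spoil the approximation. -/
theorem mem_of_forall_exists_mem_dominatedCone (hW : IsFace b W) (hne : W.Nonempty)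
    {T : H →L[ℂ] H} (hT : HasTrace b T 1)
    (h : ∀ ε > 0, ∃ A ∈ dominatedCone W, TraceNormLE b (A - T) ε) : T ∈ W := by
  refine hW.mem_of_forall_exists_traceNormAlong_le (isStateOperator_iff_hasTrace.2 hT)
    fun ε hε ↦ ?_
  obtain ⟨A, hA, hAT⟩ := h (min (1 / 2) (ε / 4)) (by positivity)
  obtain ⟨t, ht⟩ := hW.exists_hasTrace_of_mem_dominatedCone hne hA
  set r := min (1 / 2) (ε / 4)
  have htr : |t - 1| ≤ r := hAT.abs_trace_sub_le ht hT
  have ht2 : 1 / 2 ≤ t := by linarith [(abs_le.1 htr).1, min_le_left (1 / 2) (ε / 4)]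
  have ht0 : 0 < t := by linarith
  refine ⟨t⁻¹ • A, ?_, ?_⟩
  · have hstate : HasTrace b (t⁻¹ • A) 1 := by
      simpa [ht0.ne'] using ht.smul (inv_nonneg.2 ht0.le)
    exact (hW.mem_iff_mem_dominatedCone hne hstate).2
      (PointedCone.smul_mem _ (inv_nonneg.2 ht0.le) hA)
  · have hsplit : t⁻¹ • A - T = t⁻¹ • (A - T) + (t⁻¹ - 1) • T := by module
    have hinv : |t⁻¹ - 1| = t⁻¹ * |t - 1| := by
      rw [← abs_of_pos (inv_pos.2 ht0), ← abs_mul, abs_of_pos (inv_pos.2 ht0), mul_sub,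
        inv_mul_cancel₀ ht0.ne', mul_one, abs_sub_comm]
    rw [hsplit]
    refine ((hAT.smul t⁻¹).add (hT.traceNormLE.smul (t⁻¹ - 1))).traceNormAlong_le.trans ?_
    rw [hinv, abs_of_pos (inv_pos.2 ht0), mul_one, ← mul_add, inv_mul_le_iff₀ ht0]
    nlinarith [min_le_right (1 / 2) (ε / 4)]

theorem isClosed_faceSupport (hW : IsFace b W) (hne : W.Nonempty) :
    IsClosed (faceSupport W : Set H) := by
  refine isClosed_of_closure_subset fun v hv ↦ ?_
  rcases eq_or_ne v 0 with rfl | hv0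
  · exact zero_mem _
  have hv2 : 0 < ‖v‖ ^ 2 := by positivity
  have hstate := HasTrace.inv_norm_sq_smul_rankOne_self (b := b) hv0
  have hmem : (‖v‖ ^ 2)⁻¹ • rankOne ℂ v v ∈ W := by
    refine hW.mem_of_forall_exists_mem_dominatedCone hne hstate fun ε hε ↦ ?_
    have hcont : Continuous fun g : H ↦ |(‖v‖ ^ 2)⁻¹| * (‖g + v‖ * ‖g - v‖) := by fun_prop
    have hsmall := hcont.continuousAt.eventually_lt (x₀ := v) continuousAt_const
      (show |(‖v‖ ^ 2)⁻¹| * (‖v + v‖ * ‖v - v‖) < ε by simpa using hε)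
    obtain ⟨g, hg, hgε⟩ := ((mem_closure_iff_frequently.1 hv).and_eventually hsmall).exists
    refine ⟨(‖v‖ ^ 2)⁻¹ • rankOne ℂ g g, PointedCone.smul_mem _ (inv_nonneg.2 hv2.le) hg, ?_⟩
    rw [← smul_sub]
    exact ((traceNormLE_rankOne_self_sub_rankOne_self g v).smul _).mono hgε.le
  have hcone := PointedCone.smul_mem _ hv2.le
    ((hW.mem_iff_mem_dominatedCone hne hstate).1 hmem)
  rwa [smul_inv_smul₀ hv2.ne'] at hcone

theorem mem_iff_forall_apply_mem_faceSupport (hW : IsFace b W) (hne : W.Nonempty)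
    {T : H →L[ℂ] H} (hT : HasTrace b T 1) : T ∈ W ↔ ∀ x, T x ∈ faceSupport W := by
  refine ⟨fun hTW x ↦ ?_, fun h ↦ ?_⟩
  · exact mem_dominatedCone_of_le (PointedCone.smul_mem _ (sq_nonneg _)
      ((hW.mem_iff_mem_dominatedCone hne hT).1 hTW)) (rankOne_self_nonneg _)
      (rankOne_apply_self_le hT.nonneg x)
  · have hsqrt := sqrt_apply_mem_of_forall_apply_mem hT.nonneg (hW.isClosed_faceSupport hne) h
    refine hW.mem_of_forall_exists_mem_dominatedCone hne hT fun ε hε ↦ ?_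
    obtain ⟨F, hF⟩ := hT.exists_traceNormLE_sum_rankOne_sub hε
    exact ⟨_, sum_mem fun i _ ↦ hsqrt (b i), hF⟩

theorem exists_isStarProjection_eq (hW : IsFace b W) (hne : W.Nonempty) :
    ∃ P : H →L[ℂ] H, IsStarProjection P ∧ W = {T | IsStateOperator b T ∧ P * T * P = T} := by
  have : CompleteSpace (faceSupport W) := (hW.isClosed_faceSupport hne).completeSpace_coe
  refine ⟨(faceSupport W).starProjection, isStarProjection_starProjection, ?_⟩
  ext T
  refine ⟨fun hT ↦ ⟨hW.1 T hT, ?_⟩, fun ⟨hT, hPTP⟩ ↦ ?_⟩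
  · have hPT : (faceSupport W).starProjection * T = T := by
      ext x
      exact Submodule.starProjection_eq_self_iff.2
        ((hW.mem_iff_forall_apply_mem_faceSupport hne (hW.hasTrace_of_mem hT)).1 hT x)
    have hTP : T * (faceSupport W).starProjection = T := by
      simpa [isStarProjection_starProjection.isSelfAdjoint.star_eq,
        (hW.hasTrace_of_mem hT).nonneg.isSelfAdjoint.star_eq] using congrArg star hPT
    rw [hPT, hTP]
  · refine (hW.mem_iff_forall_apply_mem_faceSupport hne
      (isStateOperator_iff_hasTrace.1 hT)).2 fun x ↦ ?_
    rw [← hPTP]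
    exact Submodule.starProjection_apply_mem _ _

end IsFace

section Projections

variable {ι : Type*} {b : HilbertBasis ι ℂ H} {P P' : H →L[ℂ] H}

theorem le_of_setOf_isStateOperator_subset (hP : IsStarProjection P) (hP' : IsStarProjection P')
    (h : {T | IsStateOperator b T ∧ P' * T * P' = T} ⊆ {T | IsStateOperator b T ∧ P * T * P = T}) :
    P' ≤ P := by
  rw [hP'.le_iff_mul_eq_right hP]
  ext y
  change P (P' y) = P' y
  set v := P' y
  have hP'v : P' v = v := DFunLike.congr_fun hP'.isIdempotentElem.eq y
  rcases eq_or_ne v 0 with hv0 | hv0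
  · rw [hv0, map_zero]
  set T := (‖v‖ ^ 2)⁻¹ • rankOne ℂ v v with hT
  have hstate : IsStateOperator b T :=
    isStateOperator_iff_hasTrace.2 (HasTrace.inv_norm_sq_smul_rankOne_self hv0)
  have hP'T : P' * T * P' = T := by
    have hconj := mul_rankOne_self_mul_star P' v
    rw [hP'.isSelfAdjoint.star_eq, hP'v] at hconj
    rw [hT, mul_smul_comm, smul_mul_assoc, hconj]
  have hPTP : P * T * P = T := (h ⟨hstate, hP'T⟩).2
  have hPT : P * T = T := by
    rw [← hPTP, ← mul_assoc, ← mul_assoc, hP.isIdempotentElem.eq]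
  have hTv : T v = v := by
    rw [hT, smul_apply, rankOne_apply, inner_self_eq_norm_sq_to_K, ← Complex.coe_smul, smul_smul]
    simp [hv0]
  rw [← hTv]
  exact DFunLike.congr_fun hPT v

theorem setOf_isStateOperator_subset_iff (hP : IsStarProjection P) (hP' : IsStarProjection P') :
    {T | IsStateOperator b T ∧ P' * T * P' = T} ⊆ {T | IsStateOperator b T ∧ P * T * P = T} ↔
      P' ≤ P := by
  refine ⟨le_of_setOf_isStateOperator_subset hP hP', fun hle T ⟨hT, hPTP⟩ ↦ ⟨hT, ?_⟩⟩
  have hPP' : P * P' = P' := (hP'.le_iff_mul_eq_right hP).1 hle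
  have hP'P : P' * P = P' := (hP'.le_iff_mul_eq_left hP).1 hle
  calc P * T * P = P * (P' * T * P') * P := by rw [hPTP]
    _ = (P * P') * T * (P' * P) := by simp only [mul_assoc]
    _ = T := by rw [hPP', hP'P, hPTP]

end Projections

end Faces

theorem face_projection_order_isomorphism_general
    {H : Type*} [NormedAddCommGroup H] [InnerProductSpace ℂ H] [CompleteSpace H]
    {ι : Type*} (b : HilbertBasis ι ℂ H) :
    (∀ W : Set (H →L[ℂ] H), IsFace b W → W.Nonempty →
      ∃! P : H →L[ℂ] H, (IsSelfAdjoint P ∧ IsIdempotentElem P) ∧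
        W = {T | IsStateOperator b T ∧ P * T * P = T}) ∧
    (∀ P P' : H →L[ℂ] H, IsSelfAdjoint P → IsIdempotentElem P →
      IsSelfAdjoint P' → IsIdempotentElem P' →
      ({T | IsStateOperator b T ∧ P' * T * P' = T} ⊆ {T | IsStateOperator b T ∧ P * T * P = T} ↔
        P' ≤ P)) := by
  refine ⟨fun W hW hne ↦ ?_, fun P P' hsa hid hsa' hid' ↦
    setOf_isStateOperator_subset_iff ⟨hid, hsa⟩ ⟨hid', hsa'⟩⟩
  obtain ⟨P, hP, hWP⟩ := hW.exists_isStarProjection_eq hne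
  refine ⟨P, ⟨⟨hP.isSelfAdjoint, hP.isIdempotentElem⟩, hWP⟩, ?_⟩
  rintro Q ⟨⟨hQsa, hQid⟩, hWQ⟩
  have hQ : IsStarProjection Q := ⟨hQid, hQsa⟩
  exact le_antisymm ((setOf_isStateOperator_subset_iff hP hQ).1 (hWQ.symm.trans hWP).subset)
    ((setOf_isStateOperator_subset_iff hQ hP).1 (hWP.symm.trans hWQ).subset)

/-- every nonempty face of the set of state operators corresponds to a unique
orthogonal projection `P` via `W = {T | P T P = T}`, and this correspondence is an order
isomorphism with respect to inclusion of faces and the Loewner order of projections. -/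
theorem face_projection_order_isomorphism
    {H : Type*} [NormedAddCommGroup H] [InnerProductSpace ℂ H] [CompleteSpace H]
    {ι : Type*} [Countable ι] (b : HilbertBasis ι ℂ H) :
    (∀ W : Set (H →L[ℂ] H), IsFace b W → W.Nonempty →
      ∃! P : H →L[ℂ] H, (IsSelfAdjoint P ∧ IsIdempotentElem P) ∧
        W = {T | IsStateOperator b T ∧ P * T * P = T}) ∧
    (∀ (W W' : Set (H →L[ℂ] H)) (P P' : H →L[ℂ] H),
      IsFace b W → W.Nonempty → IsFace b W' → W'.Nonempty →
      IsSelfAdjoint P → IsIdempotentElem P →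
      W = {T | IsStateOperator b T ∧ P * T * P = T} →
      IsSelfAdjoint P' → IsIdempotentElem P' →
      W' = {T | IsStateOperator b T ∧ P' * T * P' = T} →
      (W' ⊆ W ↔ P' ≤ P)) := by
  obtain ⟨hexists, hle⟩ := face_projection_order_isomorphism_general b
  refine ⟨hexists, ?_⟩
  rintro _ _ P P' - - - - hsa hid rfl hsa' hid' rfl
  exact hle P P' hsa hid hsa' hid'
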